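/- Let (D'_1, D'_2) be a random vector with distribution f'_2, for a probability measure P on ℤ_+ × [0,1] with 0 < P_{21} < ∞ and P_{32}, P_{33}, P_{43} < ∞. Then E[D'_1] = P_{32}/P_{21}, E[(D'_1)²] = (P_{43} + P_{32})/P_{21}, E[D'_1 D'_2] = (P_{43} + P_{33})/P_{21}, and consequently Cov(D'_1, D'_2) = (P_{43} + P_{33})/P_{21} − (P_{32}/P_{21})² and Var(D'_1) = (P_{43} + P_{32})/P_{21} − (P_{32}/P_{21})². -/

import Mathlib

open MeasureTheory ProbabilityTheory Filter
open scoped ENNReal Topology Classical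

noncomputable section

/-- The binomial probability mass function `Bin(x,y)(s)`. -/
def binP (x : ℕ) (y : ℝ) (s : ℕ) : ℝ := (x.choose s : ℝ) * y ^ s * (1 - y) ^ (x - s)

/-- Convolution of (mass) functions on `ℕ`. -/
def conv (f g : ℕ → ℝ) (s : ℕ) : ℝ := ∑ i ∈ Finset.range (s + 1), f i * g (s - i)

/-- Iterated convolution power: `convPow f j` is the `j`-fold convolution of `f`. -/
def convPow (f : ℕ → ℝ) : ℕ → ℕ → ℝ
  | 0 => fun s => if s = 0 then 1 else 0
  | j + 1 => conv f (convPow f j)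

/-- The compound Poisson probability mass function `CPoi(lam, f)`, i.e. the law of
`H_1 + ⋯ + H_Λ` where `Λ ~ Poi(lam)` and the `H_k` are i.i.d. with mass function `f`,
independent of `Λ`. -/
def cpoi (lam : ℝ) (f : ℕ → ℝ) (s : ℕ) : ℝ :=
  ∑' j : ℕ, Real.exp (-lam) * lam ^ j / (j.factorial : ℝ) * convPow f j s

/-- Convolution of (mass) functions on `ℕ × ℕ`. -/
def conv2 (F G : ℕ → ℕ → ℝ) (s t : ℕ) : ℝ :=
  ∑ i ∈ Finset.range (s + 1), ∑ j ∈ Finset.range (t + 1), F i j * G (s - i) (t - j)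

/-- Point mass at `(1,1)`, as a mass function on `ℕ × ℕ`. -/
def delta11 (s t : ℕ) : ℝ := if s = 1 ∧ t = 1 then 1 else 0

/-- The cross moment `Q_{rs} = E[(X)_r Y^s]` of a layer type distribution `Q`,
where `(x)_r` is the falling factorial. -/
def mom (Q : Measure (ℕ × ℝ)) (r s : ℕ) : ℝ :=
  ∫ p, (p.1.descFactorial r : ℝ) * p.2 ^ s ∂Q

/-- The increment distribution `g(s) = ∫ Bin(x-1,y)(s) x P(dx,dy) / P₁₀`. -/
def gInc (P : Measure (ℕ × ℝ)) (s : ℕ) : ℝ :=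
  (∫ p, (p.1 : ℝ) * binP (p.1 - 1) p.2 s ∂P) / mom P 1 0

/-- The limiting degree distribution `\bar f_1 = CPoi(μ P₁₀, g)`. -/
def barf1 (mu : ℝ) (P : Measure (ℕ × ℝ)) (s : ℕ) : ℝ :=
  cpoi (mu * mom P 1 0) (gInc P) s

/-- The distribution `f₂'` of `(D₁', D₂')`:
`f₂'(s,t) = ∫ Bin(x-2,y)(s) Bin(x-2,y)(t) (x)₂ y P(dx,dy) / P₂₁`. -/
def f2p (P : Measure (ℕ × ℝ)) (s t : ℕ) : ℝ :=
  (∫ p, (p.1.descFactorial 2 : ℝ) * p.2 * binP (p.1 - 2) p.2 s * binP (p.1 - 2) p.2 t ∂P) /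
    mom P 2 1

/-- The limiting bidegree distribution `\bar f₂ = δ₍₁,₁₎ ∗ (\bar f₁ ⊗ \bar f₁) ∗ f₂'`. -/
def barf2 (mu : ℝ) (P : Measure (ℕ × ℝ)) : ℕ → ℕ → ℝ :=
  conv2 (conv2 delta11 fun s t => barf1 mu P s * barf1 mu P t) (f2p P)

lemma binP_eq (n : ℕ) (y : ℝ) (s : ℕ) : binP n y s = (bernsteinPolynomial ℝ n s).eval y := by
  simp [binP, bernsteinPolynomial]

lemma hasSum_of_range (n : ℕ) (y : ℝ) (a : ℕ → ℝ) :
    HasSum (fun s => a s * binP n y s) (∑ s ∈ Finset.range (n + 1), a s * binP n y s) := by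
  apply hasSum_sum_of_ne_finset_zero
  intro s hs
  have : n < s := by simpa using hs
  simp [binP, Nat.choose_eq_zero_of_lt this]

lemma binS0 (n : ℕ) (y : ℝ) : HasSum (fun s => (1 : ℝ) * binP n y s) 1 := by
  convert hasSum_of_range n y (fun _ => 1) using 1
  have := congrArg (Polynomial.eval y) (bernsteinPolynomial.sum ℝ n)
  simp only [Polynomial.eval_finsetSum, ← binP_eq] at this
  simp [this]

lemma binS1 (n : ℕ) (y : ℝ) : HasSum (fun s : ℕ => (s : ℝ) * binP n y s) (n * y) := by
  convert hasSum_of_range n y (fun s => (s : ℝ)) using 1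
  have := congrArg (Polynomial.eval y) (bernsteinPolynomial.sum_smul ℝ n)
  simp only [Polynomial.eval_finsetSum, nsmul_eq_mul, Polynomial.eval_mul,
    Polynomial.eval_natCast, Polynomial.eval_X, ← binP_eq] at this
  exact this.symm

lemma binS2 (n : ℕ) (y : ℝ) :
    HasSum (fun s : ℕ => (s : ℝ) ^ 2 * binP n y s) (((n * (n - 1) : ℕ) : ℝ) * y ^ 2 + n * y) := by
  have h2 := congrArg (Polynomial.eval y) (bernsteinPolynomial.sum_mul_smul ℝ n)
  simp only [Polynomial.eval_finsetSum, nsmul_eq_mul, Polynomial.eval_mul,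
    Polynomial.eval_natCast, Polynomial.eval_X, Polynomial.eval_pow, ← binP_eq] at h2
  have h3 := hasSum_of_range n y (fun s => ((s * (s - 1) : ℕ) : ℝ))
  rw [h2] at h3
  convert h3.add (binS1 n y) using 2 with s
  rcases s with _ | s
  · simp
  · push_cast [Nat.add_sub_cancel]
    ring

lemma binP_nonneg (n : ℕ) (y : ℝ) (hy : y ∈ Set.Icc (0:ℝ) 1) (s : ℕ) : 0 ≤ binP n y s := by
  have h0 := hy.1
  have h1 : 0 ≤ 1 - y := by linarith [hy.2]
  unfold binP
  positivity

lemma binP_meas (s : ℕ) : Measurable (fun p : ℕ × ℝ => binP (p.1 - 2) p.2 s) := by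
  apply measurable_from_prod_countable_right
  intro x
  simp only [binP]
  fun_prop

lemma f2p_key (P : Measure (ℕ × ℝ)) [IsProbabilityMeasure P]
    (hPsupp : P {p : ℕ × ℝ | p.2 ∈ Set.Icc (0:ℝ) 1} = 1)
    (a b : ℕ → ℝ) (ha : ∀ s, 0 ≤ a s) (hb : ∀ s, 0 ≤ b s)
    (A B : ℕ → ℝ → ℝ) (hA : ∀ n y, HasSum (fun s => a s * binP n y s) (A n y))
    (hB : ∀ n y, HasSum (fun s => b s * binP n y s) (B n y))
    (g : ℕ × ℝ → ℝ) (hg : Integrable g P)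
    (hgeq : ∀ p : ℕ × ℝ,
      (p.1.descFactorial 2 : ℝ) * p.2 * (A (p.1 - 2) p.2 * B (p.1 - 2) p.2) = g p) :
    (∑' u : ℕ × ℕ, (a u.1 * b u.2) * f2p P u.1 u.2) = (∫ p, g p ∂P) / mom P 2 1 := by
  have hae : ∀ᵐ p ∂P, p.2 ∈ Set.Icc (0:ℝ) 1 := by
    rw [← prob_compl_eq_zero_iff] at hPsupp
    · exact hPsupp
    · exact measurable_snd measurableSet_Icc
  let F : ℕ × ℕ → ℕ × ℝ → ℝ := fun u p => (a u.1 * b u.2) *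
    ((p.1.descFactorial 2 : ℝ) * p.2 * binP (p.1 - 2) p.2 u.1 * binP (p.1 - 2) p.2 u.2)
  have hnn : ∀ p : ℕ × ℝ, p.2 ∈ Set.Icc (0:ℝ) 1 → ∀ u, 0 ≤ F u p := by
    intro p hp u
    have h1 := binP_nonneg (p.1 - 2) p.2 hp u.1
    have h2 := binP_nonneg (p.1 - 2) p.2 hp u.2
    have h3 := ha u.1
    have h4 := hb u.2
    have h5 := hp.1
    simp only [F]
    positivity
  have hS : ∀ p : ℕ × ℝ, p.2 ∈ Set.Icc (0:ℝ) 1 → HasSum (fun u => F u p) (g p) := by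
    intro p hp
    have h1 := hA (p.1 - 2) p.2
    have h2 := hB (p.1 - 2) p.2
    have hs : Summable fun u : ℕ × ℕ =>
        (a u.1 * binP (p.1 - 2) p.2 u.1) * (b u.2 * binP (p.1 - 2) p.2 u.2) :=
      h1.summable.mul_of_nonneg h2.summable
        (fun s => mul_nonneg (ha s) (binP_nonneg _ _ hp s))
        (fun s => mul_nonneg (hb s) (binP_nonneg _ _ hp s))
    have h3 := (h1.mul h2 hs).mul_left ((p.1.descFactorial 2 : ℝ) * p.2)
    rw [hgeq] at h3
    have he : (fun u => F u p) = fun u : ℕ × ℕ => (p.1.descFactorial 2 : ℝ) * p.2 *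
        ((a u.1 * binP (p.1 - 2) p.2 u.1) * (b u.2 * binP (p.1 - 2) p.2 u.2)) := by
      funext u
      simp only [F]
      ring
    rw [he]
    exact h3
  have hmeas : ∀ u, Measurable (F u) := by
    intro u
    have h0 : Measurable (fun p : ℕ × ℝ => (p.1.descFactorial 2 : ℝ)) :=
      (measurable_of_countable (fun x : ℕ => (x.descFactorial 2 : ℝ))).comp measurable_fst
    exact (((h0.mul measurable_snd).mul (binP_meas u.1)).mul (binP_meas u.2)).const_mul _
  have key : HasSum (fun u => ∫ p, F u p ∂P) (∫ p, g p ∂P) := by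
    refine hasSum_integral_of_dominated_convergence F
      (fun u => (hmeas u).aestronglyMeasurable) ?_ ?_ ?_ ?_
    · intro u
      filter_upwards [hae] with p hp
      rw [Real.norm_of_nonneg (hnn p hp u)]
    · filter_upwards [hae] with p hp using (hS p hp).summable
    · refine hg.congr ?_
      filter_upwards [hae] with p hp using (hS p hp).tsum_eq.symm
    · filter_upwards [hae] with p hp using hS p hp
  have := (key.div_const (mom P 2 1)).tsum_eq
  rw [← this]
  congr 1
  ext u
  simp only [F, f2p, integral_const_mul]
  ring

/-- **Moments of `f₂'`** (computations in the proof of Proposition 1 of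
Bloznelis–Karjalainen–Leskelä). For `(D₁', D₂') ~ f₂'`:
`E D₁' = P₃₂/P₂₁`, `E (D₁')² = (P₄₃+P₃₂)/P₂₁`, `E D₁'D₂' = (P₄₃+P₃₃)/P₂₁`, and
consequently `Cov(D₁',D₂') = (P₄₃+P₃₃)/P₂₁ - (P₃₂/P₂₁)²` and
`Var(D₁') = (P₄₃+P₃₂)/P₂₁ - (P₃₂/P₂₁)²`. -/
theorem f2p_moments
    (P : Measure (ℕ × ℝ)) [IsProbabilityMeasure P]
    (hPsupp : P {p : ℕ × ℝ | p.2 ∈ Set.Icc (0:ℝ) 1} = 1)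
    (hint21 : Integrable (fun p : ℕ × ℝ => (p.1.descFactorial 2 : ℝ) * p.2 ^ (1:ℕ)) P)
    (hint32 : Integrable (fun p : ℕ × ℝ => (p.1.descFactorial 3 : ℝ) * p.2 ^ (2:ℕ)) P)
    (hint33 : Integrable (fun p : ℕ × ℝ => (p.1.descFactorial 3 : ℝ) * p.2 ^ (3:ℕ)) P)
    (hint43 : Integrable (fun p : ℕ × ℝ => (p.1.descFactorial 4 : ℝ) * p.2 ^ (3:ℕ)) P)
    (h21pos : 0 < mom P 2 1) :
    (∑' u : ℕ × ℕ, (u.1 : ℝ) * f2p P u.1 u.2) = mom P 3 2 / mom P 2 1 ∧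
    (∑' u : ℕ × ℕ, (u.1 : ℝ) ^ 2 * f2p P u.1 u.2) = (mom P 4 3 + mom P 3 2) / mom P 2 1 ∧
    (∑' u : ℕ × ℕ, ((u.1 : ℝ) * u.2) * f2p P u.1 u.2) = (mom P 4 3 + mom P 3 3) / mom P 2 1 ∧
    (∑' u : ℕ × ℕ, ((u.1 : ℝ) * u.2) * f2p P u.1 u.2) -
        (∑' u : ℕ × ℕ, (u.1 : ℝ) * f2p P u.1 u.2) *
          (∑' u : ℕ × ℕ, (u.2 : ℝ) * f2p P u.1 u.2) =
      (mom P 4 3 + mom P 3 3) / mom P 2 1 - (mom P 3 2 / mom P 2 1) ^ 2 ∧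
    (∑' u : ℕ × ℕ, (u.1 : ℝ) ^ 2 * f2p P u.1 u.2) -
        (∑' u : ℕ × ℕ, (u.1 : ℝ) * f2p P u.1 u.2) ^ 2 =
      (mom P 4 3 + mom P 3 2) / mom P 2 1 - (mom P 3 2 / mom P 2 1) ^ 2 := by
  have hd3 : ∀ x : ℕ, (x.descFactorial 3 : ℝ) = ((x - 2 : ℕ) : ℝ) * (x.descFactorial 2 : ℝ) := by
    intro x
    rw [Nat.descFactorial_succ]
    push_cast
    rfl
  have hd4 : ∀ x : ℕ, (x.descFactorial 4 : ℝ) =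
      ((x - 2 - 1 : ℕ) : ℝ) * (((x - 2 : ℕ) : ℝ) * (x.descFactorial 2 : ℝ)) := by
    intro x
    rw [Nat.descFactorial_succ, Nat.cast_mul, hd3, Nat.sub_sub]
  have e1 : (∑' u : ℕ × ℕ, (u.1 : ℝ) * f2p P u.1 u.2) = mom P 3 2 / mom P 2 1 := by
    have := f2p_key P hPsupp (fun s => (s : ℝ)) (fun _ => 1) (fun _ => by positivity)
      (fun _ => by positivity) (fun n y => (n : ℝ) * y) (fun _ _ => 1) binS1 binS0 _ hint32 (by
        intro p
        rw [hd3]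
        ring)
    simpa [mom] using this
  have e1' : (∑' u : ℕ × ℕ, (u.2 : ℝ) * f2p P u.1 u.2) = mom P 3 2 / mom P 2 1 := by
    have := f2p_key P hPsupp (fun _ => 1) (fun s => (s : ℝ)) (fun _ => by positivity)
      (fun _ => by positivity) (fun _ _ => 1) (fun n y => (n : ℝ) * y) binS0 binS1 _ hint32 (by
        intro p
        rw [hd3]
        ring)
    simpa [mom] using this
  have e2 : (∑' u : ℕ × ℕ, (u.1 : ℝ) ^ 2 * f2p P u.1 u.2) =
      (mom P 4 3 + mom P 3 2) / mom P 2 1 := by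
    have := f2p_key P hPsupp (fun s => (s : ℝ) ^ 2) (fun _ => 1) (fun _ => by positivity)
      (fun _ => by positivity) (fun n y => ((n * (n - 1) : ℕ) : ℝ) * y ^ 2 + n * y) (fun _ _ => 1) binS2 binS0 _ (hint43.add hint32) (by
        intro p
        simp only [Pi.add_apply]
        rw [hd3, hd4]
        push_cast
        ring)
    rw [integral_add' hint43 hint32] at this
    simpa only [mom, mul_one] using this
  have e3 : (∑' u : ℕ × ℕ, ((u.1 : ℝ) * u.2) * f2p P u.1 u.2) =
      (mom P 4 3 + mom P 3 3) / mom P 2 1 := by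
    have := f2p_key P hPsupp (fun s => (s : ℝ)) (fun s => (s : ℝ)) (fun _ => by positivity)
      (fun _ => by positivity) (fun n y => (n : ℝ) * y) (fun n y => (n : ℝ) * y) binS1 binS1 _ (hint43.add hint33) (by
        intro p
        simp only [Pi.add_apply]
        rw [hd3, hd4]
        rcases (p.1 - 2) with _ | m
        · simp
        · push_cast [Nat.add_sub_cancel]
          ring)
    rw [integral_add' hint43 hint33] at this
    simpa only [mom] using this
  refine ⟨e1, e2, e3, ?_, ?_⟩
  · rw [e1, e1', e3]
    ring
  · rw [e1, e2]
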